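/- Let A = diag(a₁,…,aₙ) and let X(t), P(t), Y(t), Q(t) be differentiable curves of n×r real matrices satisfying for all t the constraints XᵀX = YᵀY = I_r, XᵀP + PᵀX = 0, YᵀQ + QᵀY = 0, and the r-coupled Neumann equations with the normal metric (κ = 0): Ẋ = P − XPᵀX, Ṗ = −AY + PXᵀP + XΛ, Ẏ = Q − YQᵀY, Q̇ = −AX + QYᵀQ + YΠ, where Λ = (1/2)(XᵀAY + YᵀAX) − PᵀP and Π = (1/2)(XᵀAY + YᵀAX) − QᵀQ. With F_λ(U,W) = Uᵀ(A² − λ²I_n)⁻¹W, for every real λ with A² − λ²I_n invertible the 4r×4r block matrices 𝓛(λ) = [[λF_λ(P,X), λF_λ(P,P), F_λ(AP,Y), −I_r + F_λ(AP,Q)],[−λF_λ(X,X), −λF_λ(X,P), −F_λ(AX,Y), −F_λ(AX,Q)],[F_λ(AQ,X), −I_r + F_λ(AQ,P), λF_λ(Q,Y), λF_λ(Q,Q)],[−F_λ(AY,X), −F_λ(AY,P), −λF_λ(Y,Y), −λF_λ(Y,Q)]] and 𝓐(λ) = [[XᵀP, Λ, 0, −λI_r],[I_r, XᵀP, 0,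 0],[0, −λI_r, YᵀQ, Π],[0, 0, I_r, YᵀQ]] satisfy the dual Lax equation d/dt 𝓛(λ) = [𝓛(λ), 𝓐(λ)]. -/

import Mathlib

/-!
On `ℝⁿ ⊕ ℝⁿ` let `T = [[0, A], [A, 0]]`, and let `Ω` be the block-diagonal matrix with blocks
`[X P]` and `[Y Q]`. As `T² = A² ⊕ A²`, the resolvent of `T` is `(T - λ)⁻¹ = (T + λ)(T² - λ²)⁻¹`,
whence `𝓛(λ) = JΩᵀ(T - λ)⁻¹Ω - E` and `𝓐(λ) = M - λE` for the symplectic matrix `J` and a constant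
nilpotent matrix `E`. The Neumann equations become the single equation `Ω' = ΩM - TΩE`. Both `E` and
`M` are Hamiltonian matrices, `JEᵀ = -EJ` and `JMᵀ = -MJ`, so `Ψ = JΩᵀ` satisfies
`Ψ' = EΨT - MΨ`. Differentiating `𝓛(λ)` and using `T(T - λ)⁻¹ = 1 + λ(T - λ)⁻¹` gives
`[𝓛(λ), 𝓐(λ)]` up to the term `[E, M + ΨΩ]`, which the constraints annihilate.
-/

open Matrix

section MatrixCurves

variable {𝕜 : Type*} [NontriviallyNormedField 𝕜] {k l m n : Type*} {t : 𝕜}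

theorem hasDerivAt_matrix [Finite n] {M : 𝕜 → Matrix m n 𝕜} {M' : Matrix m n 𝕜} :
    HasDerivAt M M' t ↔ ∀ i j, HasDerivAt (fun s => M s i j) (M' i j) t := by
  cases nonempty_fintype n
  exact hasDerivAt_pi.trans (forall_congr' fun _ => hasDerivAt_pi)

theorem hasDerivAt_matrix_const [Finite n] (C : Matrix m n 𝕜) (t : 𝕜) :
    HasDerivAt (fun _ => C) 0 t :=
  hasDerivAt_matrix.2 fun i j => hasDerivAt_const t (C i j)

theorem hasDerivAt_matrix_transpose [Finite m] [Finite n] {M : 𝕜 → Matrix m n 𝕜}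
    {M' : Matrix m n 𝕜} (hM : HasDerivAt M M' t) : HasDerivAt (fun s => (M s)ᵀ) M'ᵀ t :=
  hasDerivAt_matrix.2 fun i j => hasDerivAt_matrix.1 hM j i

theorem hasDerivAt_matrix_mul [Fintype m] [Finite n] {M : 𝕜 → Matrix l m 𝕜}
    {M' : Matrix l m 𝕜} {N : 𝕜 → Matrix m n 𝕜} {N' : Matrix m n 𝕜}
    (hM : HasDerivAt M M' t) (hN : HasDerivAt N N' t) :
    HasDerivAt (fun s => M s * N s) (M' * N t + M t * N') t := by
  rw [hasDerivAt_matrix] at *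
  intro i j
  simp only [mul_apply, Matrix.add_apply, ← Finset.sum_add_distrib]
  exact HasDerivAt.fun_sum fun x _ => (hM i x).mul (hN x j)

theorem hasDerivAt_matrix_sub_const [Finite n] {M : 𝕜 → Matrix m n 𝕜} {M' : Matrix m n 𝕜}
    (hM : HasDerivAt M M' t) (C : Matrix m n 𝕜) : HasDerivAt (fun s => M s - C) M' t :=
  hasDerivAt_matrix.2 fun i j => (hasDerivAt_matrix.1 hM i j).sub_const (C i j)

theorem hasDerivAt_fromCols [Finite m] [Finite n] {M : 𝕜 → Matrix l m 𝕜}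
    {M' : Matrix l m 𝕜} {N : 𝕜 → Matrix l n 𝕜} {N' : Matrix l n 𝕜}
    (hM : HasDerivAt M M' t) (hN : HasDerivAt N N' t) :
    HasDerivAt (fun s => fromCols (M s) (N s)) (fromCols M' N') t := by
  rw [hasDerivAt_matrix] at *
  rintro i (j | j)
  exacts [hM i j, hN i j]

theorem hasDerivAt_fromBlocks_diagonal [Finite l] [Finite n] {M : 𝕜 → Matrix k l 𝕜}
    {M' : Matrix k l 𝕜} {N : 𝕜 → Matrix m n 𝕜} {N' : Matrix m n 𝕜}
    (hM : HasDerivAt M M' t) (hN : HasDerivAt N N' t) :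
    HasDerivAt (fun s => fromBlocks (M s) 0 0 (N s)) (fromBlocks M' 0 0 N') t := by
  rw [hasDerivAt_matrix] at *
  rintro (i | i) (j | j)
  exacts [hM i j, hasDerivAt_const t 0, hasDerivAt_const t 0, hN i j]

end MatrixCurves

section Moser

variable {m k : Type*} [Fintype m] [DecidableEq m] [Fintype k]

theorem moser_lax_identity {R : Type*} [CommRing R] {T : Matrix m m R} {c : R}
    (hT : IsUnit (T - c • 1)) {Ψ : Matrix k m R} {Ω : Matrix m k R} {E M : Matrix k k R}
    (hEM : Commute E (M + Ψ * Ω)) :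
    (E * Ψ * T - M * Ψ) * (T - c • 1)⁻¹ * Ω + Ψ * (T - c • 1)⁻¹ * (Ω * M - T * Ω * E) =
      ⁅Ψ * (T - c • 1)⁻¹ * Ω - E, M - c • E⁆ := by
  rw [isUnit_iff_isUnit_det] at hT
  have mul_resolvent : T * (T - c • 1)⁻¹ = 1 + c • (T - c • 1)⁻¹ := by
    simpa [sub_mul, sub_eq_iff_eq_add] using mul_nonsing_inv _ hT
  have resolvent_mul : (T - c • 1)⁻¹ * T = 1 + c • (T - c • 1)⁻¹ := by
    simpa [mul_sub, sub_eq_iff_eq_add] using nonsing_inv_mul _ hT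
  generalize (T - c • 1)⁻¹ = B at *
  have hleft : E * Ψ * T * B * Ω = E * (Ψ * Ω) + c • (E * (Ψ * B * Ω)) := by
    rw [Matrix.mul_assoc (E * Ψ), mul_resolvent]
    simp only [Matrix.mul_add, Matrix.add_mul, Matrix.mul_one, Matrix.mul_smul, Matrix.smul_mul,
      Matrix.mul_assoc]
  have hright : Ψ * B * (T * Ω * E) = Ψ * Ω * E + c • (Ψ * B * Ω * E) := by
    rw [Matrix.mul_assoc T, ← Matrix.mul_assoc (Ψ * B), Matrix.mul_assoc Ψ, resolvent_mul]
    simp only [Matrix.mul_add, Matrix.add_mul, Matrix.mul_one, Matrix.mul_smul, Matrix.smul_mul,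
      Matrix.mul_assoc]
  have hcomm : E * (Ψ * Ω) = M * E + Ψ * Ω * E - E * M := by
    rw [← add_mul, ← hEM.eq, mul_add, add_sub_cancel_left]
  rw [Matrix.sub_mul, Matrix.sub_mul, Matrix.mul_sub, hleft, hright, hcomm, Ring.lie_def]
  simp only [mul_sub, sub_mul, Matrix.mul_smul, Matrix.smul_mul, ← Matrix.mul_assoc]
  module

theorem hasDerivAt_moser_lax {𝕜 : Type*} [NontriviallyNormedField 𝕜] {T : Matrix m m 𝕜}
    (hT : T.IsSymm) {c : 𝕜} (hc : IsUnit (T - c • 1)) {J E M : Matrix k k 𝕜}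
    (hE : J * Eᵀ = -(E * J)) (hM : J * Mᵀ = -(M * J)) {Ω : 𝕜 → Matrix m k 𝕜} {t : 𝕜}
    (hEM : Commute E (M + J * (Ω t)ᵀ * Ω t)) (hΩ : HasDerivAt Ω (Ω t * M - T * Ω t * E) t) :
    HasDerivAt (fun s => J * (Ω s)ᵀ * (T - c • 1)⁻¹ * Ω s - E)
      ⁅J * (Ω t)ᵀ * (T - c • 1)⁻¹ * Ω t - E, M - c • E⁆ t := by
  have hΨ : HasDerivAt (fun s => J * (Ω s)ᵀ) (E * (J * (Ω t)ᵀ) * T - M * (J * (Ω t)ᵀ)) t := by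
    convert hasDerivAt_matrix_mul (hasDerivAt_matrix_const J t)
      (hasDerivAt_matrix_transpose hΩ) using 1
    simp only [transpose_sub, transpose_mul, hT.eq, Matrix.mul_sub, ← Matrix.mul_assoc, hE, hM,
      Matrix.neg_mul, Matrix.zero_mul]
    abel
  rw [← moser_lax_identity hc hEM]
  refine hasDerivAt_matrix_sub_const ?_ E
  simpa using hasDerivAt_matrix_mul (hasDerivAt_matrix_mul hΨ (hasDerivAt_matrix_const _ t)) hΩ

end Moser

noncomputable section DualLaxPair

variable {R : Type*} [CommRing R] {n κ : Type*}

/-- The resolvent form `F_λ(U, W) = Uᵀ (A² - λ²)⁻¹ W`. It takes junk values when `A² - λ²` is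
singular. -/
def resolventForm [Fintype n] [DecidableEq n] (A : Matrix n n R) (lam : R) (U W : Matrix n κ R) :
    Matrix κ κ R :=
  Uᵀ * (A ^ 2 - lam ^ 2 • 1)⁻¹ * W

/-- The dual Lax matrix `𝓛(λ)` of the coupled Neumann system, its 4 × 4 blocks being grouped into
2 × 2 blocks according to the two particles. -/
def dualLaxMatrix [Fintype n] [DecidableEq n] [DecidableEq κ] (A : Matrix n n R) (lam : R)
    (X P Y Q : Matrix n κ R) : Matrix ((κ ⊕ κ) ⊕ (κ ⊕ κ)) ((κ ⊕ κ) ⊕ (κ ⊕ κ)) R :=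
  let F := resolventForm A lam
  fromBlocks
    (fromBlocks (lam • F P X) (lam • F P P) (-(lam • F X X)) (-(lam • F X P)))
    (fromBlocks (F (A * P) Y) (-1 + F (A * P) Q) (-F (A * X) Y) (-F (A * X) Q))
    (fromBlocks (F (A * Q) X) (-1 + F (A * Q) P) (-F (A * Y) X) (-F (A * Y) P))
    (fromBlocks (lam • F Q Y) (lam • F Q Q) (-(lam • F Y Y)) (-(lam • F Y Q)))

/-- The second matrix `𝓐(λ)` of the dual Lax pair, in terms of the angular velocities `S₁ = XᵀP`,
`S₂ = YᵀQ` and the multipliers `Λ₁ = Λ`, `Λ₂ = Π` of the two particles. -/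
def dualLaxConnection [DecidableEq κ] (lam : R) (S₁ Λ₁ S₂ Λ₂ : Matrix κ κ R) :
    Matrix ((κ ⊕ κ) ⊕ (κ ⊕ κ)) ((κ ⊕ κ) ⊕ (κ ⊕ κ)) R :=
  fromBlocks (fromBlocks S₁ Λ₁ 1 S₁) (fromBlocks 0 (-(lam • 1)) 0 0)
    (fromBlocks 0 (-(lam • 1)) 0 0) (fromBlocks S₂ Λ₂ 1 S₂)

/-- The value of `𝓐(λ)` at `λ = 0`. -/
def dualLaxGauge [DecidableEq κ] (S₁ Λ₁ S₂ Λ₂ : Matrix κ κ R) :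
    Matrix ((κ ⊕ κ) ⊕ (κ ⊕ κ)) ((κ ⊕ κ) ⊕ (κ ⊕ κ)) R :=
  fromBlocks (fromBlocks S₁ Λ₁ 1 S₁) 0 0 (fromBlocks S₂ Λ₂ 1 S₂)

/-- The operator on `Rⁿ ⊕ Rⁿ` through which each particle feels the other. Its resolvent at `λ` is
what combines the factors `λ` and `A` of the resolvent form in `𝓛(λ)`. -/
def couplingOperator (A : Matrix n n R) : Matrix (n ⊕ n) (n ⊕ n) R :=
  fromBlocks 0 A A 0

/-- The phase point `(X, P), (Y, Q)` as a single matrix, with one diagonal block per particle. -/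
def phaseMatrix (X P Y Q : Matrix n κ R) : Matrix (n ⊕ n) ((κ ⊕ κ) ⊕ (κ ⊕ κ)) R :=
  fromBlocks (fromCols X P) 0 0 (fromCols Y Q)

variable (R κ) in
/-- The symplectic matrix of the two particles. The sign is opposite to that of `Matrix.J`, so that
it sends the rows `Xᵀ, Pᵀ` to `Pᵀ, -Xᵀ`. -/
def pairJ [DecidableEq κ] : Matrix ((κ ⊕ κ) ⊕ (κ ⊕ κ)) ((κ ⊕ κ) ⊕ (κ ⊕ κ)) R :=
  fromBlocks (-J κ R) 0 0 (-J κ R)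

variable (R κ) in
/-- The nilpotent matrix that is the value of `-𝓛(λ)` at `λ = ∞` and the coefficient of `-λ` in
`𝓐(λ)`. -/
def couplingNilpotent [DecidableEq κ] : Matrix ((κ ⊕ κ) ⊕ (κ ⊕ κ)) ((κ ⊕ κ) ⊕ (κ ⊕ κ)) R :=
  fromBlocks 0 (fromBlocks 0 1 0 0) (fromBlocks 0 1 0 0) 0

theorem isSymm_couplingOperator {A : Matrix n n R} (hA : A.IsSymm) :
    (couplingOperator A).IsSymm :=
  isSymm_zero.fromBlocks hA.eq isSymm_zero

theorem couplingOperator_sub_mul_resolvent [Fintype n] [DecidableEq n] {A : Matrix n n R} {lam : R}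
    (h : IsUnit (A ^ 2 - lam ^ 2 • (1 : Matrix n n R))) :
    (couplingOperator A - lam • 1) *
      fromBlocks (lam • (A ^ 2 - lam ^ 2 • 1)⁻¹) (A * (A ^ 2 - lam ^ 2 • 1)⁻¹)
        (A * (A ^ 2 - lam ^ 2 • 1)⁻¹) (lam • (A ^ 2 - lam ^ 2 • 1)⁻¹) = 1 := by
  have hB := mul_nonsing_inv _ ((isUnit_iff_isUnit_det _).1 h)
  generalize (A ^ 2 - lam ^ 2 • 1)⁻¹ = B at *
  have hdiag : A * (A * B) - lam • lam • B = 1 := by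
    rw [← hB, sub_mul, smul_mul_assoc, one_mul, smul_smul, pow_two, pow_two, mul_assoc]
  rw [couplingOperator, ← fromBlocks_one, fromBlocks_smul, sub_eq_add_neg,
    fromBlocks_neg, fromBlocks_add, fromBlocks_multiply, fromBlocks_inj]
  simpa [sub_eq_add_neg, add_comm] using hdiag

theorem isUnit_couplingOperator_sub [Fintype n] [DecidableEq n] {A : Matrix n n R} {lam : R}
    (h : IsUnit (A ^ 2 - lam ^ 2 • (1 : Matrix n n R))) :
    IsUnit (couplingOperator A - lam • 1) :=
  .of_mul_eq_one _ (couplingOperator_sub_mul_resolvent h)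

theorem pairJ_mul_transpose_phaseMatrix [Fintype κ] [DecidableEq κ] (X P Y Q : Matrix n κ R) :
    pairJ R κ * (phaseMatrix X P Y Q)ᵀ =
      fromBlocks (fromRows Pᵀ (-Xᵀ)) 0 0 (fromRows Qᵀ (-Yᵀ)) := by
  simp [pairJ, J, phaseMatrix, fromBlocks_transpose, transpose_fromCols, fromBlocks_multiply,
    fromBlocks_neg, fromBlocks_mul_fromRows]

theorem dualLaxMatrix_eq_mul_resolvent_sub [Fintype n] [DecidableEq n] [Fintype κ] [DecidableEq κ]
    {A : Matrix n n R} (hA : A.IsSymm) {lam : R}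
    (h : IsUnit (A ^ 2 - lam ^ 2 • (1 : Matrix n n R))) (X P Y Q : Matrix n κ R) :
    dualLaxMatrix A lam X P Y Q =
      pairJ R κ * (phaseMatrix X P Y Q)ᵀ * (couplingOperator A - lam • 1)⁻¹ *
        phaseMatrix X P Y Q - couplingNilpotent R κ := by
  rw [inv_eq_right_inv (couplingOperator_sub_mul_resolvent h), pairJ_mul_transpose_phaseMatrix]
  simp [dualLaxMatrix, resolventForm, phaseMatrix, couplingNilpotent, fromBlocks_multiply,
    fromRows_mul, fromBlocks_smul, sub_eq_add_neg, fromBlocks_neg, fromBlocks_add, hA.eq,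
    Matrix.mul_assoc, add_comm]

theorem dualLaxConnection_eq_gauge_sub [DecidableEq κ] (lam : R) (S₁ Λ₁ S₂ Λ₂ : Matrix κ κ R) :
    dualLaxConnection lam S₁ Λ₁ S₂ Λ₂ =
      dualLaxGauge S₁ Λ₁ S₂ Λ₂ - lam • couplingNilpotent R κ := by
  simp [dualLaxConnection, dualLaxGauge, couplingNilpotent, fromBlocks_smul, sub_eq_add_neg,
    fromBlocks_add, fromBlocks_neg]

theorem pairJ_mul_transpose_couplingNilpotent [Fintype κ] [DecidableEq κ] :
    pairJ R κ * (couplingNilpotent R κ)ᵀ = -(couplingNilpotent R κ * pairJ R κ) := by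
  simp [pairJ, couplingNilpotent, J, fromBlocks_transpose, fromBlocks_multiply, fromBlocks_neg]

theorem pairJ_mul_transpose_dualLaxGauge [Fintype κ] [DecidableEq κ] {S₁ Λ₁ S₂ Λ₂ : Matrix κ κ R}
    (hS₁ : S₁ᵀ = -S₁) (hΛ₁ : Λ₁.IsSymm) (hS₂ : S₂ᵀ = -S₂) (hΛ₂ : Λ₂.IsSymm) :
    pairJ R κ * (dualLaxGauge S₁ Λ₁ S₂ Λ₂)ᵀ = -(dualLaxGauge S₁ Λ₁ S₂ Λ₂ * pairJ R κ) := by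
  simp [pairJ, dualLaxGauge, J, fromBlocks_transpose, fromBlocks_multiply, fromBlocks_neg, hS₁,
    hΛ₁.eq, hS₂, hΛ₂.eq]

theorem commute_couplingNilpotent [Fintype n] [Fintype κ] [DecidableEq κ]
    {X P Y Q : Matrix n κ R} (hX : Xᵀ * X = 1) (hY : Yᵀ * Y = 1)
    (hXP : Xᵀ * P + Pᵀ * X = 0) (hYQ : Yᵀ * Q + Qᵀ * Y = 0) (Λ₁ Λ₂ : Matrix κ κ R) :
    Commute (couplingNilpotent R κ) (dualLaxGauge (Xᵀ * P) Λ₁ (Yᵀ * Q) Λ₂ +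
      pairJ R κ * (phaseMatrix X P Y Q)ᵀ * phaseMatrix X P Y Q) := by
  have hPX : Pᵀ * X = -(Xᵀ * P) := eq_neg_of_add_eq_zero_right hXP
  have hQY : Qᵀ * Y = -(Yᵀ * Q) := eq_neg_of_add_eq_zero_right hYQ
  have hsum : dualLaxGauge (Xᵀ * P) Λ₁ (Yᵀ * Q) Λ₂ +
      pairJ R κ * (phaseMatrix X P Y Q)ᵀ * phaseMatrix X P Y Q =
        fromBlocks (fromBlocks 0 (Λ₁ + Pᵀ * P) 0 0) 0 0 (fromBlocks 0 (Λ₂ + Qᵀ * Q) 0 0) := by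
    rw [pairJ_mul_transpose_phaseMatrix]
    simp [dualLaxGauge, phaseMatrix, fromBlocks_multiply, fromBlocks_add, hX, hY, hPX, hQY]
  rw [hsum, Commute, SemiconjBy]
  simp [couplingNilpotent, fromBlocks_multiply]

theorem isSymm_multiplier [Fintype n] {A : Matrix n n R} (hA : A.IsSymm) (c : R)
    (X Y P : Matrix n κ R) : (c • (Xᵀ * A * Y + Yᵀ * A * X) - Pᵀ * P).IsSymm := by
  refine .sub (.smul ?_ c) (by simp [IsSymm])
  convert isSymm_add_transpose_self (Xᵀ * A * Y) using 2
  simp [hA.eq, Matrix.mul_assoc]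

end DualLaxPair

section CoupledNeumann

variable {𝕜 : Type*} [NontriviallyNormedField 𝕜] {n κ : Type*} [Fintype n] [Fintype κ]
  [DecidableEq κ] {t : 𝕜}

theorem hasDerivAt_fromCols_of_neumann {X P : 𝕜 → Matrix n κ 𝕜} {W : Matrix n κ 𝕜}
    {Λ : Matrix κ κ 𝕜} (hXP : (X t)ᵀ * P t + (P t)ᵀ * X t = 0)
    (hX : HasDerivAt X (P t - X t * (P t)ᵀ * X t) t)
    (hP : HasDerivAt P (-W + P t * (X t)ᵀ * P t + X t * Λ) t) :
    HasDerivAt (fun s => fromCols (X s) (P s))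
      (fromCols (X t) (P t) * fromBlocks ((X t)ᵀ * P t) Λ 1 ((X t)ᵀ * P t) - fromCols 0 W) t := by
  have hPX : (P t)ᵀ * X t = -((X t)ᵀ * P t) := eq_neg_of_add_eq_zero_right hXP
  convert hasDerivAt_fromCols hX hP using 1
  ext i (j | j)
  · simp [fromCols_mul_fromBlocks, Matrix.mul_assoc, hPX, add_comm]
  · simp only [fromCols_mul_fromBlocks, Matrix.sub_apply, fromCols_apply_inr, Matrix.add_apply,
      Matrix.neg_apply, Matrix.mul_assoc]
    abel

theorem hasDerivAt_phaseMatrix {A : Matrix n n 𝕜} {X P Y Q : 𝕜 → Matrix n κ 𝕜}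
    {Λ₁ Λ₂ : Matrix κ κ 𝕜} (hXP : (X t)ᵀ * P t + (P t)ᵀ * X t = 0)
    (hYQ : (Y t)ᵀ * Q t + (Q t)ᵀ * Y t = 0)
    (hX : HasDerivAt X (P t - X t * (P t)ᵀ * X t) t)
    (hP : HasDerivAt P (-(A * Y t) + P t * (X t)ᵀ * P t + X t * Λ₁) t)
    (hY : HasDerivAt Y (Q t - Y t * (Q t)ᵀ * Y t) t)
    (hQ : HasDerivAt Q (-(A * X t) + Q t * (Y t)ᵀ * Q t + Y t * Λ₂) t) :
    HasDerivAt (fun s => phaseMatrix (X s) (P s) (Y s) (Q s))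
      (phaseMatrix (X t) (P t) (Y t) (Q t) * dualLaxGauge ((X t)ᵀ * P t) Λ₁ ((Y t)ᵀ * Q t) Λ₂ -
        couplingOperator A * phaseMatrix (X t) (P t) (Y t) (Q t) * couplingNilpotent 𝕜 κ) t := by
  simp only [phaseMatrix]
  convert hasDerivAt_fromBlocks_diagonal (hasDerivAt_fromCols_of_neumann hXP hX hP)
    (hasDerivAt_fromCols_of_neumann hYQ hY hQ) using 1
  simp [dualLaxGauge, couplingOperator, couplingNilpotent, fromBlocks_multiply,
    mul_fromCols, fromCols_mul_fromBlocks, sub_eq_add_neg, fromBlocks_neg, fromBlocks_add]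

theorem coupled_neumann_dual_lax_general [DecidableEq n] {A : Matrix n n 𝕜} (hA : A.IsSymm)
    {X P Y Q : 𝕜 → Matrix n κ 𝕜} (hcX : (X t)ᵀ * X t = 1) (hcY : (Y t)ᵀ * Y t = 1)
    (hcXP : (X t)ᵀ * P t + (P t)ᵀ * X t = 0) (hcYQ : (Y t)ᵀ * Q t + (Q t)ᵀ * Y t = 0)
    {Λ₁ Λ₂ : Matrix κ κ 𝕜} (hΛ₁ : Λ₁.IsSymm) (hΛ₂ : Λ₂.IsSymm)
    (hX : HasDerivAt X (P t - X t * (P t)ᵀ * X t) t)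
    (hP : HasDerivAt P (-(A * Y t) + P t * (X t)ᵀ * P t + X t * Λ₁) t)
    (hY : HasDerivAt Y (Q t - Y t * (Q t)ᵀ * Y t) t)
    (hQ : HasDerivAt Q (-(A * X t) + Q t * (Y t)ᵀ * Q t + Y t * Λ₂) t)
    {lam : 𝕜} (hinv : IsUnit (A ^ 2 - lam ^ 2 • (1 : Matrix n n 𝕜))) :
    HasDerivAt (fun s => dualLaxMatrix A lam (X s) (P s) (Y s) (Q s))
      ⁅dualLaxMatrix A lam (X t) (P t) (Y t) (Q t),
        dualLaxConnection lam ((X t)ᵀ * P t) Λ₁ ((Y t)ᵀ * Q t) Λ₂⁆ t := by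
  have hS₁ : ((X t)ᵀ * P t)ᵀ = -((X t)ᵀ * P t) := by
    simpa using eq_neg_of_add_eq_zero_right hcXP
  have hS₂ : ((Y t)ᵀ * Q t)ᵀ = -((Y t)ᵀ * Q t) := by
    simpa using eq_neg_of_add_eq_zero_right hcYQ
  simp only [dualLaxMatrix_eq_mul_resolvent_sub hA hinv, dualLaxConnection_eq_gauge_sub]
  exact hasDerivAt_moser_lax (isSymm_couplingOperator hA) (isUnit_couplingOperator_sub hinv)
    pairJ_mul_transpose_couplingNilpotent
    (pairJ_mul_transpose_dualLaxGauge hS₁ hΛ₁ hS₂ hΛ₂)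
    (commute_couplingNilpotent hcX hcY hcXP hcYQ Λ₁ Λ₂)
    (hasDerivAt_phaseMatrix hcXP hcYQ hX hP hY hQ)

end CoupledNeumann

/-- The r-coupled Neumann system with the normal metric implies the dual
4r×4r Lax equation d/dt 𝓛(λ) = [𝓛(λ), 𝓐(λ)], with F_λ(U,W) = Uᵀ(A² − λ²I)⁻¹W. -/
theorem coupled_neumann_dual_lax {n r : ℕ} (a : Fin n → ℝ)
    (A : Matrix (Fin n) (Fin n) ℝ) (hA : A = Matrix.diagonal a)
    (X P Y Q : ℝ → Matrix (Fin n) (Fin r) ℝ)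
    (hcX : ∀ t, (X t)ᵀ * X t = 1) (hcY : ∀ t, (Y t)ᵀ * Y t = 1)
    (hcXP : ∀ t, (X t)ᵀ * P t + (P t)ᵀ * X t = 0)
    (hcYQ : ∀ t, (Y t)ᵀ * Q t + (Q t)ᵀ * Y t = 0)
    (Lam Pim : ℝ → Matrix (Fin r) (Fin r) ℝ)
    (hLam : ∀ t, Lam t =
      (1 / 2 : ℝ) • ((X t)ᵀ * A * Y t + (Y t)ᵀ * A * X t) - (P t)ᵀ * P t)
    (hPim : ∀ t, Pim t =
      (1 / 2 : ℝ) • ((X t)ᵀ * A * Y t + (Y t)ᵀ * A * X t) - (Q t)ᵀ * Q t)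
    (hX : ∀ t i j, HasDerivAt (fun s => X s i j)
      ((P t - X t * (P t)ᵀ * X t) i j) t)
    (hP : ∀ t i j, HasDerivAt (fun s => P s i j)
      ((-(A * Y t) + P t * (X t)ᵀ * P t + X t * Lam t) i j) t)
    (hY : ∀ t i j, HasDerivAt (fun s => Y s i j)
      ((Q t - Y t * (Q t)ᵀ * Y t) i j) t)
    (hQ : ∀ t i j, HasDerivAt (fun s => Q s i j)
      ((-(A * X t) + Q t * (Y t)ᵀ * Q t + Y t * Pim t) i j) t)
    (lam : ℝ)
    (hinv : IsUnit (A ^ 2 - lam ^ 2 • (1 : Matrix (Fin n) (Fin n) ℝ)))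
    (Fl : Matrix (Fin n) (Fin r) ℝ → Matrix (Fin n) (Fin r) ℝ → Matrix (Fin r) (Fin r) ℝ)
    (hFl : ∀ U W, Fl U W = Uᵀ * (A ^ 2 - lam ^ 2 • 1)⁻¹ * W)
    (𝓛 𝓐 : ℝ → Matrix ((Fin r ⊕ Fin r) ⊕ (Fin r ⊕ Fin r))
      ((Fin r ⊕ Fin r) ⊕ (Fin r ⊕ Fin r)) ℝ)
    (h𝓛 : ∀ t, 𝓛 t = Matrix.fromBlocks
      (Matrix.fromBlocks
        (lam • Fl (P t) (X t)) (lam • Fl (P t) (P t))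
        (-(lam • Fl (X t) (X t))) (-(lam • Fl (X t) (P t))))
      (Matrix.fromBlocks
        (Fl (A * P t) (Y t)) (-1 + Fl (A * P t) (Q t))
        (-(Fl (A * X t) (Y t))) (-(Fl (A * X t) (Q t))))
      (Matrix.fromBlocks
        (Fl (A * Q t) (X t)) (-1 + Fl (A * Q t) (P t))
        (-(Fl (A * Y t) (X t))) (-(Fl (A * Y t) (P t))))
      (Matrix.fromBlocks
        (lam • Fl (Q t) (Y t)) (lam • Fl (Q t) (Q t))
        (-(lam • Fl (Y t) (Y t))) (-(lam • Fl (Y t) (Q t)))))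
    (h𝓐 : ∀ t, 𝓐 t = Matrix.fromBlocks
      (Matrix.fromBlocks ((X t)ᵀ * P t) (Lam t) 1 ((X t)ᵀ * P t))
      (Matrix.fromBlocks 0 (-(lam • 1)) 0 0)
      (Matrix.fromBlocks 0 (-(lam • 1)) 0 0)
      (Matrix.fromBlocks ((Y t)ᵀ * Q t) (Pim t) 1 ((Y t)ᵀ * Q t))) :
    ∀ t i j, HasDerivAt (fun s => 𝓛 s i j) ((𝓛 t * 𝓐 t - 𝓐 t * 𝓛 t) i j) t := by
  intro t
  have hAsymm : A.IsSymm := hA ▸ isSymm_diagonal a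
  obtain rfl : Fl = resolventForm A lam := funext₂ hFl
  obtain rfl := funext h𝓛
  obtain rfl := funext h𝓐
  exact hasDerivAt_matrix.1 <| coupled_neumann_dual_lax_general hAsymm (hcX t) (hcY t) (hcXP t)
    (hcYQ t) (hLam t ▸ isSymm_multiplier hAsymm _ _ _ _) (hPim t ▸ isSymm_multiplier hAsymm _ _ _ _)
    (hasDerivAt_matrix.2 (hX t)) (hasDerivAt_matrix.2 (hP t)) (hasDerivAt_matrix.2 (hY t))
    (hasDerivAt_matrix.2 (hQ t)) hinv
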